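/- Let σ be an adjacency-free permutation of length n and let π = σ[α₁,…,αₙ] be an inflation of σ in which every αᵢ is one of the permutations 1, 12, 21, and at least one αᵢ has length 2 (so that π ≠ σ). Then μ(σ,π) = (−1)^{|π|−|σ|}; in particular μ(σ,π) ≠ 0. -/

import Mathlib

/-!
The permutation pattern poset and its Möbius function.

A permutation of length `n` is represented as an element of the symmetric
group on `Fin n`; the collection of all permutations of all lengths is the
sigma type `PPerm`.  Pattern containment `PPerm.Le` makes `PPerm` into the
permutation pattern poset, and `mu` is its Möbius function, defined by the
usual recursion `μ(σ,σ) = 1`, `μ(σ,π) = -∑_{σ ≤ λ < π} μ(σ,λ)` for `σ < π`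
and `μ(σ,π) = 0` otherwise.
-/

open scoped Classical

/-- A permutation of an arbitrary finite length `n`, as an element of the
symmetric group on `Fin n`. -/
abbrev PPerm : Type := Σ n : ℕ, Equiv.Perm (Fin n)

namespace PPerm

/-- Classical pattern containment `σ ≤ π`: there is a strictly increasing map
of positions along which `π` realises the same relative order as `σ`. -/
def Le (σ π : PPerm) : Prop :=
  ∃ f : Fin σ.1 → Fin π.1, StrictMono f ∧
    ∀ a b : Fin σ.1, σ.2 a < σ.2 b ↔ π.2 (f a) < π.2 (f b)

/-- Strict pattern containment. -/
def Lt (σ π : PPerm) : Prop := Le σ π ∧ σ ≠ π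

/-- The permutation `1` of length one. -/
def one : PPerm := ⟨1, 1⟩

/-- The direct sum `α ⊕ β` of two permutations: `β` is placed after and
above `α`. -/
def dsum (α β : PPerm) : PPerm :=
  ⟨α.1 + β.1, finSumFinEquiv.symm.trans ((Equiv.sumCongr α.2 β.2).trans finSumFinEquiv)⟩

end PPerm

/-- Fuelled recursion computing the Möbius function of the permutation
pattern poset.  Any `λ` with `σ ≤ λ < π` has length `< |π|`, so for any
fuel `≥ |π| + 1` this computes the standard recursion
`μ(σ,σ) = 1`, `μ(σ,π) = -∑_{σ ≤ λ < π} μ(σ,λ)` for `σ < π`, and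
`μ(σ,π) = 0` when `σ ≰ π`. -/
noncomputable def muAux : ℕ → PPerm → PPerm → ℤ
  | 0, _, _ => 0
  | n + 1, σ, π =>
    if σ = π then 1
    else if PPerm.Le σ π then
      - ∑ m ∈ Finset.range π.1,
          ∑ p ∈ Finset.univ.filter
              (fun p : Equiv.Perm (Fin m) => PPerm.Le σ ⟨m, p⟩ ∧ PPerm.Le ⟨m, p⟩ π),
            muAux n σ ⟨m, p⟩
    else 0

/-- The Möbius function of the permutation pattern poset. -/
noncomputable def mu (σ π : PPerm) : ℤ := muAux (π.1 + 1) σ π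

/-- The closed interval `[σ, π]` of the permutation pattern poset, as a
finset (any `λ ≤ π` has length `≤ |π|`). -/
noncomputable def intervalCC (σ π : PPerm) : Finset PPerm :=
  (Finset.range (π.1 + 1)).biUnion fun m =>
    (Finset.univ.filter fun p : Equiv.Perm (Fin m) =>
        PPerm.Le σ ⟨m, p⟩ ∧ PPerm.Le ⟨m, p⟩ π).image fun p => (⟨m, p⟩ : PPerm)

/-- The half-open interval `[σ, π)` of the permutation pattern poset. -/
noncomputable def intervalCO (σ π : PPerm) : Finset PPerm :=
  (intervalCC σ π).filter fun lam => lam ≠ π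

/-- Position `i` starts an adjacency of `π`: `|π(i+1) − π(i)| = 1`. -/
def AdjAtPos (π : PPerm) (i : Fin π.1) : Prop :=
  ∃ j : Fin π.1, (j : ℕ) = (i : ℕ) + 1 ∧
    ((π.2 j : ℕ) = (π.2 i : ℕ) + 1 ∨ (π.2 i : ℕ) = (π.2 j : ℕ) + 1)

/-- `σ` is adjacency-free: it has no adjacency. -/
def AdjacencyFree (σ : PPerm) : Prop := ∀ i : Fin σ.1, ¬ AdjAtPos σ i

/-- The permutation `12`. -/
def p12 : PPerm := ⟨2, 1⟩

/-- The permutation `21`. -/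
noncomputable def p21 : PPerm := ⟨2, Equiv.swap 0 1⟩

/-- `π` is the inflation `σ[α₁,…,αₙ]` of `σ` by the (nonempty) permutations
`α i`: each entry `σ(i)` of `σ` is replaced by an interval of entries
order-isomorphic to `α i`, the intervals being ordered relative to one
another as the corresponding entries of `σ`.  Concretely, the block of `α i`
occupies the positions starting after all blocks of earlier positions, and
its values sit above all blocks with smaller `σ`-values. -/
def IsInflation (σ : PPerm) (α : Fin σ.1 → PPerm) (π : PPerm) : Prop :=
  π.1 = ∑ i : Fin σ.1, (α i).1 ∧
    ∀ (i : Fin σ.1) (t : Fin (α i).1) (p : Fin π.1),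
      (p : ℕ) =
          (∑ k ∈ Finset.univ.filter fun k : Fin σ.1 => (k : ℕ) < (i : ℕ), (α k).1) +
            (t : ℕ) →
      (π.2 p : ℕ) =
        (∑ k ∈ Finset.univ.filter fun k : Fin σ.1 => σ.2 k < σ.2 i, (α k).1) +
          ((α i).2 t : ℕ)

/-!
Every occurrence of the adjacency-free `σ` in its inflation `π` takes exactly one entry from each
block: two entries from the same block of size two would be an adjacency of `σ`. So each
`τ ∈ [σ, π]` is again an inflation of `σ` by permutations of length one or two, obtained from `π`
by shrinking some of the blocks of size two, and `τ` is determined by the set of blocks that keep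
size two. This makes `[σ, π]` a Boolean lattice of rank `|π| - |σ|`. The set of blocks of size two
of `τ` can be read off from containment alone: these are the entries of `σ` that have more than
one position among the occurrences of `σ` in `τ`.
-/

theorem sum_ssubsets_neg_one_pow_card {𝕜 ι : Type*} [Ring 𝕜] {s : Finset ι} (hs : s.Nonempty) :
    ∑ t ∈ s.ssubsets, (-1 : 𝕜) ^ t.card = -(-1) ^ s.card := by
  have hpowerset : ∑ t ∈ s.powerset, (-1 : 𝕜) ^ t.card = 0 :=
    mod_cast congrArg (Int.cast : ℤ → 𝕜) (Finset.sum_powerset_neg_one_pow_card_of_nonempty hs)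
  rw [← Finset.sum_erase_add _ _ (Finset.mem_powerset_self s)] at hpowerset
  exact eq_neg_of_add_eq_zero_left hpowerset

section BooleanInterval

variable {α ι : Type*} [PartialOrder α] {D : α → Finset ι}

theorem lt_iff_ssubset_of_le_iff_subset {s : Set α}
    (hle : ∀ x ∈ s, ∀ y ∈ s, x ≤ y ↔ D x ⊆ D y) {x y : α} (hx : x ∈ s) (hy : y ∈ s) :
    x < y ↔ D x ⊂ D y := by
  rw [lt_iff_le_not_ge, hle x hx y hy, hle y hy x hx, Finset.ssubset_def]

variable [LocallyFiniteOrder α] {a b : α}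

theorem sum_Ico_eq_sum_ssubsets {M : Type*} [AddCommMonoid M] (F : Finset ι → M) (hab : a ≤ b)
    (hle : ∀ x ∈ Set.Icc a b, ∀ y ∈ Set.Icc a b, x ≤ y ↔ D x ⊆ D y)
    (hsurj : ∀ S ⊆ D b, ∃ x ∈ Set.Icc a b, D x = S) :
    ∑ x ∈ Finset.Ico a b, F (D x) = ∑ S ∈ (D b).ssubsets, F S := by
  have hIcc : ∀ {x}, x ∈ Finset.Ico a b → x ∈ Set.Icc a b := fun hx =>
    Set.Ico_subset_Icc_self (Finset.mem_Ico.1 hx)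
  have hlt : ∀ {x}, x ∈ Set.Icc a b → (x < b ↔ D x ⊂ D b) := fun hx =>
    lt_iff_ssubset_of_le_iff_subset hle hx ⟨hab, le_rfl⟩
  refine Finset.sum_nbij D (fun x hx => ?_) (fun x hx y hy hxy => ?_) (fun S hS => ?_)
    (fun _ _ => rfl)
  · exact Finset.mem_ssubsets.2 ((hlt (hIcc hx)).1 (Finset.mem_Ico.1 hx).2)
  · exact le_antisymm ((hle x (hIcc hx) y (hIcc hy)).2 hxy.subset)
      ((hle y (hIcc hy) x (hIcc hx)).2 hxy.superset)
  · have hS := Finset.mem_ssubsets.1 hS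
    obtain ⟨x, hx, rfl⟩ := hsurj S hS.subset
    exact ⟨x, Finset.mem_coe.2 (Finset.mem_Ico.2 ⟨hx.1, (hlt hx).2 hS⟩), rfl⟩

theorem incidenceAlgebra_mu_eq_neg_one_pow_card {𝕜 : Type*} [Ring 𝕜] [DecidableEq α]
    (hab : a ≤ b) (hle : ∀ x ∈ Set.Icc a b, ∀ y ∈ Set.Icc a b, x ≤ y ↔ D x ⊆ D y)
    (hsurj : ∀ S ⊆ D b, ∃ x ∈ Set.Icc a b, D x = S) :
    IncidenceAlgebra.mu 𝕜 a b = (-1) ^ (D b).card := by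
  induction hDb : D b using Finset.strongInduction generalizing b with | H s ih
  subst hDb
  have ha : a ∈ Set.Icc a b := ⟨le_rfl, hab⟩
  have hb : b ∈ Set.Icc a b := ⟨hab, le_rfl⟩
  have hDa : D a = ∅ := by
    obtain ⟨x, hx, hDx⟩ := hsurj ∅ (Finset.empty_subset _)
    exact Finset.subset_empty.1 (hDx ▸ (hle a ha x hx).1 hx.1)
  rcases eq_or_ne a b with rfl | hne
  · simp only [IncidenceAlgebra.mu_self, hDa, Finset.card_empty, pow_zero]
  have hnonempty : (D b).Nonempty := Finset.empty_ssubset.1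
    (hDa ▸ (lt_iff_ssubset_of_le_iff_subset hle ha hb).1 (hab.lt_of_ne hne))
  have hmu : ∀ x ∈ Finset.Ico a b, IncidenceAlgebra.mu 𝕜 a x = (-1) ^ (D x).card := by
    intro x hx
    obtain ⟨hax, hxb⟩ := Finset.mem_Ico.1 hx
    have hx : x ∈ Set.Icc a b := ⟨hax, hxb.le⟩
    have hsub : Set.Icc a x ⊆ Set.Icc a b := Set.Icc_subset_Icc_right hxb.le
    have hDx : D x ⊂ D b := (lt_iff_ssubset_of_le_iff_subset hle hx hb).1 hxb
    refine ih _ hDx hax (fun y hy z hz => hle y (hsub hy) z (hsub hz)) (fun S hS => ?_) rfl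
    obtain ⟨y, hy, rfl⟩ := hsurj S (hS.trans hDx.subset)
    exact ⟨y, ⟨hy.1, (hle y hy x hx).2 hS⟩, rfl⟩
  rw [IncidenceAlgebra.mu_eq_neg_sum_Ico_of_ne hne, Finset.sum_congr rfl hmu,
    sum_Ico_eq_sum_ssubsets (fun S => (-1) ^ S.card) hab hle hsurj,
    sum_ssubsets_neg_one_pow_card hnonempty, neg_neg]

end BooleanInterval

/-- `f` is an occurrence of the pattern `σ` in `π`: it lists increasingly the positions of `π`
whose entries are ordered like those of `σ`. -/
structure IsOccurrence (σ π : PPerm) (f : Fin σ.1 → Fin π.1) : Prop where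
  strictMono : StrictMono f
  value_lt_iff (x y : Fin σ.1) : σ.2 x < σ.2 y ↔ π.2 (f x) < π.2 (f y)

namespace IsOccurrence

variable {σ τ π : PPerm}

protected theorem id (π : PPerm) : IsOccurrence π π id :=
  ⟨strictMono_id, fun _ _ => Iff.rfl⟩

theorem comp {f : Fin σ.1 → Fin τ.1} {g : Fin τ.1 → Fin π.1}
    (hg : IsOccurrence τ π g) (hf : IsOccurrence σ τ f) : IsOccurrence σ π (g ∘ f) :=
  ⟨hg.strictMono.comp hf.strictMono,
    fun x y => (hf.value_lt_iff x y).trans (hg.value_lt_iff _ _)⟩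

theorem length_le {f : Fin σ.1 → Fin π.1} (hf : IsOccurrence σ π f) : σ.1 ≤ π.1 := by
  simpa using Fintype.card_le_of_injective f hf.strictMono.injective

theorem eq_of_length_eq {f : Fin σ.1 → Fin π.1} (hf : IsOccurrence σ π f) (hlen : σ.1 = π.1) :
    σ = π := by
  obtain ⟨n, s⟩ := σ
  obtain ⟨m, t⟩ := π
  obtain rfl : n = m := hlen
  obtain rfl : f = id := hf.strictMono.eq_id
  have hmono : StrictMono (t ∘ s.symm) := fun x y hxy =>
    (hf.value_lt_iff _ _).1 (by simpa using hxy)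
  have hst : t = s := Equiv.ext fun x => by simpa using congrFun hmono.eq_id (s x)
  rw [hst]

end IsOccurrence

namespace PPerm

instance : PartialOrder PPerm where
  le := Le
  le_refl π := ⟨id, (IsOccurrence.id π).1, (IsOccurrence.id π).2⟩
  le_trans := by
    rintro σ τ π ⟨f, hf, hf'⟩ ⟨g, hg, hg'⟩
    have hgf := IsOccurrence.comp (π := π) ⟨hg, hg'⟩ ⟨hf, hf'⟩
    exact ⟨_, hgf.1, hgf.2⟩
  le_antisymm := by
    rintro σ π ⟨f, hf, hf'⟩ ⟨g, hg, hg'⟩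
    have hf : IsOccurrence σ π f := ⟨hf, hf'⟩
    exact hf.eq_of_length_eq (le_antisymm hf.length_le (IsOccurrence.mk hg hg').length_le)

variable {σ τ π : PPerm}

theorem le_iff_exists_isOccurrence : σ ≤ π ↔ ∃ f, IsOccurrence σ π f :=
  exists_congr fun _ => ⟨fun h => ⟨h.1, h.2⟩, fun h => ⟨h.1, h.2⟩⟩

theorem length_le_of_le (h : σ ≤ π) : σ.1 ≤ π.1 :=
  (le_iff_exists_isOccurrence.1 h).elim fun _ hf => hf.length_le

theorem lt_iff_le_and_length_lt : σ < π ↔ σ ≤ π ∧ σ.1 < π.1 := by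
  refine ⟨fun h => ⟨h.le, ?_⟩, fun h => lt_of_le_of_ne h.1 fun he => (he ▸ h.2).false⟩
  obtain ⟨f, hf⟩ := le_iff_exists_isOccurrence.1 h.le
  exact lt_of_le_of_ne hf.length_le fun hlen => h.ne (hf.eq_of_length_eq hlen)

theorem mem_intervalCC : τ ∈ intervalCC σ π ↔ σ ≤ τ ∧ τ ≤ π := by
  obtain ⟨m, t⟩ := τ
  simp only [intervalCC, Finset.mem_biUnion, Finset.mem_range, Finset.mem_image,
    Finset.mem_filter_univ]
  constructor
  · rintro ⟨_, -, _, hp, ⟨⟩⟩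
    exact hp
  · exact fun h => ⟨m, Nat.lt_succ_of_le (length_le_of_le h.2), t, h, rfl⟩

noncomputable instance : LocallyFiniteOrder PPerm :=
  LocallyFiniteOrder.ofIcc PPerm intervalCC fun _ _ _ => mem_intervalCC

theorem sigma_filter_eq_Ico (σ π : PPerm) :
    ((Finset.range π.1).sigma fun m =>
      Finset.univ.filter fun p : Equiv.Perm (Fin m) => Le σ ⟨m, p⟩ ∧ Le ⟨m, p⟩ π) =
      Finset.Ico σ π := by
  ext τ
  rw [Finset.mem_Ico, lt_iff_le_and_length_lt, Finset.mem_sigma, Finset.mem_range,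
    Finset.mem_filter_univ]
  exact ⟨fun h => ⟨h.2.1, h.2.2, h.1⟩, fun h => ⟨h.2.2, h.1, h.2.1⟩⟩

end PPerm

theorem muAux_eq_incidenceAlgebra_mu {n : ℕ} {σ π : PPerm} (hn : π.1 < n) :
    muAux n σ π = IncidenceAlgebra.mu ℤ σ π := by
  induction n generalizing π with
  | zero => exact absurd hn (Nat.not_lt_zero _)
  | succ n ih =>
    rw [muAux, IncidenceAlgebra.mu_apply]
    by_cases hle : σ ≤ π
    · rw [if_pos (show PPerm.Le σ π from hle), Finset.sum_sigma', PPerm.sigma_filter_eq_Ico,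
        Finset.sum_congr rfl fun τ hτ => ih ?_]
      exact (PPerm.lt_iff_le_and_length_lt.1 (Finset.mem_Ico.1 hτ).2).2.trans_le
        (Nat.le_of_lt_succ hn)
    · rw [if_neg (show ¬ PPerm.Le σ π from hle), Finset.Ico_eq_empty fun h => hle h.le,
        Finset.sum_empty, neg_zero]

theorem mu_eq_incidenceAlgebra_mu (σ π : PPerm) : mu σ π = IncidenceAlgebra.mu ℤ σ π :=
  muAux_eq_incidenceAlgebra_mu (Nat.lt_succ_self _)

theorem IsOccurrence.le_of_range_subset {σ τ π : PPerm} {f : Fin σ.1 → Fin π.1}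
    {g : Fin τ.1 → Fin π.1} (hf : IsOccurrence σ π f) (hg : IsOccurrence τ π g)
    (hfg : Set.range f ⊆ Set.range g) : σ ≤ τ := by
  choose k hk using Set.range_subset_iff.1 hfg
  refine PPerm.le_iff_exists_isOccurrence.2 ⟨k, fun x y hxy => ?_, fun x y => ?_⟩
  · rw [← hg.strictMono.lt_iff_lt, hk, hk]
    exact hf.strictMono hxy
  · rw [hg.value_lt_iff, hk, hk, hf.value_lt_iff]

theorem exists_isOccurrence_range_eq (π : PPerm) (K : Finset (Fin π.1)) :
    ∃ (τ : PPerm) (g : Fin τ.1 → Fin π.1), IsOccurrence τ π g ∧ Set.range g = K := by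
  let positions : Fin K.card ≃o K := K.orderIsoOfFin rfl
  let values : Fin K.card ≃o K.map π.2.toEmbedding :=
    (K.map π.2.toEmbedding).orderIsoOfFin (Finset.card_map _)
  let valueOf : K ≃ K.map π.2.toEmbedding := π.2.subtypeEquiv fun p => by simp
  refine ⟨⟨K.card, (positions.toEquiv.trans valueOf).trans values.symm.toEquiv⟩,
    fun x => positions x, ⟨fun x y hxy => positions.lt_iff_lt.2 hxy, fun x y => ?_⟩, ?_⟩
  · exact values.symm.lt_iff_lt (x := valueOf (positions x)) (y := valueOf (positions y))
  · exact (positions.surjective.range_comp Subtype.val).trans Subtype.range_coe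

/-- The entries of `σ` whose position in `π` depends on the chosen occurrence of `σ`. When `π` is
an inflation of an adjacency-free `σ` by `1`, `12` and `21`, these are the entries inflated by
`12` or `21` (`IsBlockMap.mem_movableEntries`). -/
noncomputable def movableEntries (σ π : PPerm) : Finset (Fin σ.1) :=
  Finset.univ.filter fun i => ∃ f g, IsOccurrence σ π f ∧ IsOccurrence σ π g ∧ f i ≠ g i

theorem movableEntries_mono {σ τ π : PPerm} (h : τ ≤ π) :
    movableEntries σ τ ⊆ movableEntries σ π := by
  obtain ⟨k, hk⟩ := PPerm.le_iff_exists_isOccurrence.1 h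
  intro i hi
  obtain ⟨f, g, hf, hg, hne⟩ := Finset.mem_filter_univ _ |>.1 hi
  exact Finset.mem_filter_univ _ |>.2
    ⟨k ∘ f, k ∘ g, hk.comp hf, hk.comp hg, hk.strictMono.injective.ne hne⟩

theorem adjAtPos_iff {π : PPerm} {p : Fin π.1} :
    AdjAtPos π p ↔ ∃ q, p ⋖ q ∧ (π.2 p ⋖ π.2 q ∨ π.2 q ⋖ π.2 p) := by
  simp only [AdjAtPos, Fin.covBy_iff, Nat.covBy_iff_add_one_eq, eq_comm]

/-- `b` exhibits `π` as an inflation of `σ` by permutations of length one or two: it sends a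
position of `π` to the entry of `σ` whose block contains it. -/
structure IsBlockMap (σ π : PPerm) (b : Fin π.1 → Fin σ.1) : Prop where
  monotone : Monotone b
  value_mono ⦃p q : Fin π.1⦄ : π.2 p ≤ π.2 q → σ.2 (b p) ≤ σ.2 (b q)
  surjective : Function.Surjective b
  eq_or_eq ⦃p q r : Fin π.1⦄ : p ≠ q → b q = b p → b r = b p → r = p ∨ r = q

namespace IsBlockMap

variable {σ ρ τ π : PPerm} {b : Fin π.1 → Fin σ.1}

protected theorem id (σ : PPerm) : IsBlockMap σ σ id where
  monotone := monotone_id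
  value_mono _ _ h := h
  surjective := Function.surjective_id
  eq_or_eq _ _ _ _ _ h := Or.inl h

theorem lt_iff (h : IsBlockMap σ π b) {p q : Fin π.1} (hne : b p ≠ b q) :
    p < q ↔ b p < b q :=
  ⟨fun hpq => (h.monotone hpq.le).lt_of_ne hne, fun hpq => h.monotone.reflect_lt hpq⟩

theorem value_lt_iff (h : IsBlockMap σ π b) {p q : Fin π.1} (hne : b p ≠ b q) :
    π.2 p < π.2 q ↔ σ.2 (b p) < σ.2 (b q) :=
  ⟨fun hpq => (h.value_mono hpq.le).lt_of_ne (σ.2.injective.ne hne),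
    fun hpq => lt_of_not_ge fun hqp => hpq.not_ge (h.value_mono hqp)⟩

theorem isOccurrence_of_comp_eq {a : Fin ρ.1 → Fin σ.1} {c : Fin τ.1 → Fin σ.1}
    (ha : IsBlockMap σ ρ a) (hc : IsBlockMap σ τ c) {f : Fin ρ.1 → Fin τ.1}
    (hcf : ∀ x, c (f x) = a x)
    (hlt : ∀ x y, x ≠ y → a x = a y → (x < y ↔ f x < f y))
    (hvalue : ∀ x y, x ≠ y → a x = a y → (ρ.2 x < ρ.2 y ↔ τ.2 (f x) < τ.2 (f y))) :
    IsOccurrence ρ τ f := by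
  have hne : ∀ {x y}, a x ≠ a y → c (f x) ≠ c (f y) := by simp [hcf]
  refine ⟨fun x y hxy => ?_, fun x y => ?_⟩
  · by_cases hblock : a x = a y
    · exact (hlt x y hxy.ne hblock).1 hxy
    · rwa [hc.lt_iff (hne hblock), hcf, hcf, ← ha.lt_iff hblock]
  · rcases eq_or_ne x y with rfl | hxy
    · simp only [lt_self_iff_false]
    by_cases hblock : a x = a y
    · exact hvalue x y hxy hblock
    · rw [hc.value_lt_iff (hne hblock), hcf, hcf, ← ha.value_lt_iff hblock]

theorem isOccurrence_of_rightInverse (h : IsBlockMap σ π b) {s : Fin σ.1 → Fin π.1}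
    (hs : Function.RightInverse s b) : IsOccurrence σ π s :=
  (IsBlockMap.id σ).isOccurrence_of_comp_eq h hs (fun _ _ hne heq => absurd heq hne)
    fun _ _ hne heq => absurd heq hne

protected theorem le (h : IsBlockMap σ π b) : σ ≤ π := by
  obtain ⟨s, hs⟩ := h.surjective.hasRightInverse
  exact PPerm.le_iff_exists_isOccurrence.2 ⟨s, h.isOccurrence_of_rightInverse hs⟩

/-- Two entries of an occurrence of `σ` in the same block would have no other entry of the
occurrence between them, neither by position nor by value, and so form an adjacency of `σ`. -/
theorem injective_comp_isOccurrence (h : IsBlockMap σ π b) (hσ : AdjacencyFree σ)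
    {f : Fin σ.1 → Fin π.1} (hf : IsOccurrence σ π f) : Function.Injective (b ∘ f) := by
  refine Function.Injective.of_lt_imp_ne fun x y hxy hblock => ?_
  have hblock : b (f y) = b (f x) := hblock.symm
  have hpair : ∀ z, b (f z) = b (f x) → z = x ∨ z = y := fun z hz =>
    (h.eq_or_eq (hf.strictMono hxy).ne hblock hz).imp
      (fun e => hf.strictMono.injective e) (fun e => hf.strictMono.injective e)
  have hcov : x ⋖ y := by
    refine ⟨hxy, fun z hxz hzy => ?_⟩
    have hz : b (f z) = b (f x) := le_antisymm
      (hblock ▸ h.monotone (hf.strictMono hzy).le) (h.monotone (hf.strictMono hxz).le)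
    rcases hpair z hz with rfl | rfl
    exacts [hxz.false, hzy.false]
  have hvalue : ∀ u v, b (f v) = b (f u) → (∀ z, b (f z) = b (f u) → z = u ∨ z = v) →
      σ.2 u < σ.2 v → σ.2 u ⋖ σ.2 v := by
    refine fun u v huv hpair hlt => ⟨hlt, fun w huw hwv => ?_⟩
    obtain ⟨z, rfl⟩ := σ.2.surjective w
    have hz : b (f z) = b (f u) := σ.2.injective <| le_antisymm
      (huv ▸ h.value_mono ((hf.value_lt_iff _ _).1 hwv).le)
      (h.value_mono ((hf.value_lt_iff _ _).1 huw).le)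
    rcases hpair z hz with rfl | rfl
    exacts [huw.false, hwv.false]
  refine hσ x (adjAtPos_iff.2 ⟨y, hcov, ?_⟩)
  rcases lt_or_gt_of_ne (σ.2.injective.ne hxy.ne) with hlt | hgt
  · exact Or.inl (hvalue x y hblock hpair hlt)
  · exact Or.inr (hvalue y x hblock.symm (fun z hz => (hpair z (hz.trans hblock)).symm) hgt)

theorem apply_isOccurrence (h : IsBlockMap σ π b) (hσ : AdjacencyFree σ)
    {f : Fin σ.1 → Fin π.1} (hf : IsOccurrence σ π f) (i : Fin σ.1) : b (f i) = i := by
  have hmono : StrictMono (b ∘ f) :=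
    (h.monotone.comp hf.strictMono.monotone).strictMono_of_injective
      (h.injective_comp_isOccurrence hσ hf)
  exact congrFun hmono.eq_id i

theorem comp (h : IsBlockMap σ π b) (hσ : AdjacencyFree σ) {g : Fin τ.1 → Fin π.1}
    (hg : IsOccurrence τ π g) (hστ : σ ≤ τ) : IsBlockMap σ τ (b ∘ g) where
  monotone := h.monotone.comp hg.strictMono.monotone
  value_mono x y hxy := h.value_mono <| le_of_not_gt fun hlt =>
    hxy.not_gt ((hg.value_lt_iff y x).2 hlt)
  surjective i := by
    obtain ⟨f, hf⟩ := PPerm.le_iff_exists_isOccurrence.1 hστ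
    exact ⟨f i, h.apply_isOccurrence hσ (hg.comp hf) i⟩
  eq_or_eq _ _ _ hne hq hr := (h.eq_or_eq (hg.strictMono.injective.ne hne) hq hr).imp
    (fun e => hg.strictMono.injective e) (fun e => hg.strictMono.injective e)

theorem mem_movableEntries (h : IsBlockMap σ π b) (hσ : AdjacencyFree σ) {i : Fin σ.1} :
    i ∈ movableEntries σ π ↔ ∃ p q, p ≠ q ∧ b p = i ∧ b q = i := by
  rw [movableEntries, Finset.mem_filter_univ]
  constructor
  · rintro ⟨f, g, hf, hg, hne⟩
    exact ⟨f i, g i, hne, h.apply_isOccurrence hσ hf i, h.apply_isOccurrence hσ hg i⟩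
  · rintro ⟨p, q, hne, hp, hq⟩
    obtain ⟨s, hs⟩ := h.surjective.hasRightInverse
    have hupdate : ∀ r, b r = i → IsOccurrence σ π (Function.update s i r) := fun r hr =>
      h.isOccurrence_of_rightInverse fun j => by
        rcases eq_or_ne j i with rfl | hj
        · rwa [Function.update_self]
        · rw [Function.update_of_ne hj, hs j]
    exact ⟨_, _, hupdate p hp, hupdate q hq, by simpa using hne⟩

theorem length_eq (h : IsBlockMap σ π b) (hσ : AdjacencyFree σ) :
    π.1 = σ.1 + (movableEntries σ π).card := by
  obtain ⟨s, hs⟩ := h.surjective.hasRightInverse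
  have hmem : ∀ {p}, p ∈ (Finset.univ.image s)ᶜ ↔ s (b p) ≠ p := fun {p} => by
    have : (∃ i, s i = p) ↔ s (b p) = p :=
      ⟨by rintro ⟨i, rfl⟩; rw [hs i], fun hp => ⟨_, hp⟩⟩
    simp [this]
  have hcompl : (Finset.univ.image s)ᶜ.card = (movableEntries σ π).card := by
    refine Finset.card_nbij b (fun p hp => ?_) (fun p hp q hq hpq => ?_) (fun i hi => ?_)
    · exact (h.mem_movableEntries hσ).2 ⟨s (b p), p, hmem.1 hp, hs _, rfl⟩
    · by_contra hne
      rcases h.eq_or_eq hne hpq.symm (hs (b p)) with hsp | hsq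
      exacts [hmem.1 hp hsp, hmem.1 hq (hpq ▸ hsq)]
    · obtain ⟨p, q, hne, rfl, hq⟩ := (h.mem_movableEntries hσ).1 hi
      by_cases hp : s (b p) = p
      · exact ⟨q, hmem.2 fun hsq => hne (by rw [← hp, ← hq, hsq]), hq⟩
      · exact ⟨p, hmem.2 hp, rfl⟩
  rw [Finset.card_compl, Finset.card_image_of_injective _ hs.injective, Finset.card_univ,
    Fintype.card_fin, Fintype.card_fin] at hcompl
  have := PPerm.length_le_of_le h.le
  omega

theorem le_of_movableEntries_subset (h : IsBlockMap σ π b) (hσ : AdjacencyFree σ)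
    (hσρ : σ ≤ ρ) (hρπ : ρ ≤ π) (hστ : σ ≤ τ) (hτπ : τ ≤ π)
    (hsub : movableEntries σ ρ ⊆ movableEntries σ τ) : ρ ≤ τ := by
  obtain ⟨k, hk⟩ := PPerm.le_iff_exists_isOccurrence.1 hρπ
  obtain ⟨g, hg⟩ := PPerm.le_iff_exists_isOccurrence.1 hτπ
  have hρ : IsBlockMap σ ρ (b ∘ k) := h.comp hσ hk hσρ
  have hτ : IsBlockMap σ τ (b ∘ g) := h.comp hσ hg hστ
  have hlift : ∀ x, ∃ y, b (g y) = b (k x) ∧ (b (k x) ∈ movableEntries σ ρ → g y = k x) := by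
    intro x
    by_cases hx : b (k x) ∈ movableEntries σ ρ
    · obtain ⟨y, y', hne, hy, hy'⟩ := (hτ.mem_movableEntries hσ).1 (hsub hx)
      rcases h.eq_or_eq (hg.strictMono.injective.ne hne) (hy'.trans hy.symm) hy.symm with e | e
      exacts [⟨y, hy, fun _ => e.symm⟩, ⟨y', hy', fun _ => e.symm⟩]
    · obtain ⟨y, hy⟩ := hτ.surjective (b (k x))
      exact ⟨y, hy, fun hx' => absurd hx' hx⟩
  choose f hf hgf using hlift
  have hpair : ∀ x y, x ≠ y → b (k x) = b (k y) → g (f x) = k x ∧ g (f y) = k y :=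
    fun x y hne hxy =>
      ⟨hgf x ((hρ.mem_movableEntries hσ).2 ⟨x, y, hne, rfl, hxy.symm⟩),
        hgf y ((hρ.mem_movableEntries hσ).2 ⟨x, y, hne, hxy, rfl⟩)⟩
  refine PPerm.le_iff_exists_isOccurrence.2 ⟨f, hρ.isOccurrence_of_comp_eq hτ hf ?_ ?_⟩
  · intro x y hne hxy
    obtain ⟨hx, hy⟩ := hpair x y hne hxy
    rw [← hg.strictMono.lt_iff_lt, hx, hy, hk.strictMono.lt_iff_lt]
  · intro x y hne hxy
    obtain ⟨hx, hy⟩ := hpair x y hne hxy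
    rw [hg.value_lt_iff, hx, hy, hk.value_lt_iff]

theorem exists_movableEntries_eq (h : IsBlockMap σ π b) (hσ : AdjacencyFree σ)
    {S : Finset (Fin σ.1)} (hS : S ⊆ movableEntries σ π) :
    ∃ τ ∈ Set.Icc σ π, movableEntries σ τ = S := by
  obtain ⟨s, hs⟩ := h.surjective.hasRightInverse
  obtain ⟨τ, g, hg, hrange⟩ := exists_isOccurrence_range_eq π
    (Finset.univ.filter fun p => p ∈ Set.range s ∨ b p ∈ S)
  have hmem : ∀ p, p ∈ Set.range g ↔ p ∈ Set.range s ∨ b p ∈ S := fun p => by simp [hrange]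
  have hστ : σ ≤ τ := (h.isOccurrence_of_rightInverse hs).le_of_range_subset hg
    fun p hp => (hmem p).2 (Or.inl hp)
  refine ⟨τ, ⟨hστ, PPerm.le_iff_exists_isOccurrence.2 ⟨g, hg⟩⟩, Finset.ext fun i => ?_⟩
  rw [(h.comp hσ hg hστ).mem_movableEntries hσ]
  constructor
  · rintro ⟨x, y, hne, hx, hy⟩
    by_contra hi
    have hsection : ∀ z, b (g z) = i → g z = s i := by
      rintro z rfl
      obtain ⟨j, hj⟩ := ((hmem (g z)).1 ⟨z, rfl⟩).resolve_right hi
      rw [← hj, hs j]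
    exact hne (hg.strictMono.injective ((hsection x hx).trans (hsection y hy).symm))
  · intro hi
    obtain ⟨p, q, hne, rfl, hq⟩ := (h.mem_movableEntries hσ).1 (hS hi)
    obtain ⟨x, rfl⟩ := (hmem p).2 (Or.inr hi)
    obtain ⟨y, rfl⟩ := (hmem q).2 (Or.inr (hq ▸ hi))
    exact ⟨x, y, fun e => hne (congrArg g e), rfl, hq⟩

theorem incidenceAlgebra_mu_eq (𝕜 : Type*) [Ring 𝕜] (h : IsBlockMap σ π b)
    (hσ : AdjacencyFree σ) : IncidenceAlgebra.mu 𝕜 σ π = (-1) ^ (π.1 - σ.1) := by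
  have hle : ∀ ρ ∈ Set.Icc σ π, ∀ τ ∈ Set.Icc σ π,
      ρ ≤ τ ↔ movableEntries σ ρ ⊆ movableEntries σ τ := fun ρ hρ τ hτ =>
    ⟨movableEntries_mono, h.le_of_movableEntries_subset hσ hρ.1 hρ.2 hτ.1 hτ.2⟩
  rw [h.length_eq hσ, Nat.add_sub_cancel_left]
  exact incidenceAlgebra_mu_eq_neg_one_pow_card h.le hle
    fun S hS => h.exists_movableEntries_eq hσ hS

end IsBlockMap

theorem sum_filter_lt_add_le {ι κ M : Type*} [Fintype ι] [Preorder κ] [DecidableLT κ]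
    [AddCommMonoid M] [PartialOrder M] [IsOrderedAddMonoid M] [CanonicallyOrderedAdd M]
    (f : ι → κ) (w : ι → M) {i j : ι} (hij : f i < f j) :
    (∑ k ∈ Finset.univ.filter fun k => f k < f i, w k) + w i ≤
      ∑ k ∈ Finset.univ.filter fun k => f k < f j, w k := by
  rw [add_comm, ← Finset.sum_insert (by simp)]
  refine Finset.sum_le_sum_of_subset (Finset.insert_subset (by simpa using hij) fun k hk => ?_)
  rw [Finset.mem_filter_univ] at hk ⊢
  exact hk.trans hij

theorem coe_finSigmaFinEquiv {m : ℕ} {n : Fin m → ℕ} (x : (i : Fin m) × Fin (n i)) :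
    (finSigmaFinEquiv x : ℕ) =
      (∑ k ∈ Finset.univ.filter fun k : Fin m => (k : ℕ) < x.1, n k) + x.2 := by
  rw [finSigmaFinEquiv_apply]
  congr 1
  refine Finset.sum_nbij (Fin.castLE x.1.2.le) (fun k _ => ?_) ?_ ?_ fun _ _ => rfl
  · exact Finset.mem_filter_univ _ |>.2 k.2
  · exact (Fin.castLE_injective _).injOn
  · intro k hk
    exact ⟨⟨k, by simpa using hk⟩, by simp⟩

theorem IsInflation.exists_equiv {σ π : PPerm} {α : Fin σ.1 → PPerm} (hπ : IsInflation σ α π) :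
    ∃ e : ((i : Fin σ.1) × Fin (α i).1) ≃ Fin π.1,
      (∀ x, (e x : ℕ) =
        (∑ k ∈ Finset.univ.filter fun k : Fin σ.1 => (k : ℕ) < x.1, (α k).1) + x.2) ∧
      ∀ x, (π.2 (e x) : ℕ) =
        (∑ k ∈ Finset.univ.filter fun k : Fin σ.1 => σ.2 k < σ.2 x.1, (α k).1) +
          (α x.1).2 x.2 :=
  ⟨finSigmaFinEquiv.trans (finCongr hπ.1.symm), coe_finSigmaFinEquiv,
    fun x => hπ.2 x.1 x.2 _ (coe_finSigmaFinEquiv x)⟩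

theorem IsInflation.exists_isBlockMap {σ π : PPerm} {α : Fin σ.1 → PPerm}
    (hπ : IsInflation σ α π) (hpos : ∀ i, 0 < (α i).1) (hle : ∀ i, (α i).1 ≤ 2) :
    ∃ b, IsBlockMap σ π b := by
  obtain ⟨e, hposition, hvalue⟩ := hπ.exists_equiv
  refine ⟨fun p => (e.symm p).1, ?monotone, ?value_mono, ?surjective, ?eq_or_eq⟩
  case monotone =>
    refine e.forall_congr_right.1 fun x => e.forall_congr_right.1 fun y hxy => ?_
    simp only [Equiv.symm_apply_apply]
    by_contra! hlt
    have := sum_filter_lt_add_le (fun k : Fin σ.1 => (k : ℕ)) (fun k => (α k).1) hlt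
    have := hposition x
    have := hposition y
    omega
  case value_mono =>
    refine e.forall_congr_right.1 fun x => e.forall_congr_right.1 fun y hxy => ?_
    simp only [Equiv.symm_apply_apply]
    by_contra! hlt
    have := sum_filter_lt_add_le σ.2 (fun k => (α k).1) hlt
    have := hvalue x
    have := hvalue y
    omega
  case surjective => exact fun i => ⟨e ⟨i, ⟨0, hpos i⟩⟩, by simp only [Equiv.symm_apply_apply]⟩
  case eq_or_eq =>
    refine e.forall_congr_right.1 fun ⟨i, t⟩ => e.forall_congr_right.1 fun ⟨j, u⟩ =>
      e.forall_congr_right.1 fun ⟨k, v⟩ hne hj hk => ?_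
    simp only [Equiv.symm_apply_apply] at hj hk
    obtain rfl : i = j := hj.symm
    obtain rfl : i = k := hk.symm
    have := hle i
    simp only [ne_eq, EmbeddingLike.apply_eq_iff_eq, Sigma.mk.injEq, heq_eq_eq, true_and]
      at hne ⊢
    omega

/-- If `σ` is adjacency-free and `π = σ[α₁,…,αₙ]` is an inflation of `σ` in
which every `αᵢ` is one of `1`, `12`, `21`, with at least one `αᵢ` of length
two, then `μ(σ,π) = (−1)^{|π|−|σ|}`; in particular `μ(σ,π) ≠ 0`. -/
theorem mu_of_inflation_by_singletons_and_adjacencies (σ π : PPerm)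
    (hσ : AdjacencyFree σ) (α : Fin σ.1 → PPerm)
    (hα : ∀ i, α i = PPerm.one ∨ α i = p12 ∨ α i = p21)
    (h2 : ∃ i, (α i).1 = 2)
    (hπ : IsInflation σ α π) :
    mu σ π = (-1) ^ (π.1 - σ.1) ∧ mu σ π ≠ 0 := by
  have hlen : ∀ i, (α i).1 = 1 ∨ (α i).1 = 2 := fun i => by
    rcases hα i with h | h | h <;> simp [h, PPerm.one, p12, p21]
  obtain ⟨b, hb⟩ := hπ.exists_isBlockMap (fun i => by have := hlen i; omega)
    (fun i => by have := hlen i; omega)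
  have hmu : mu σ π = (-1) ^ (π.1 - σ.1) := by
    rw [mu_eq_incidenceAlgebra_mu, hb.incidenceAlgebra_mu_eq ℤ hσ]
  exact ⟨hmu, hmu ▸ pow_ne_zero _ (by norm_num)⟩
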